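/- arXiv:2208.05752 — 5 statements merged into one kernel-verified Lean document; each statement's English description precedes it below -/
import Mathlib

section
/- For all positive integers n and m, δ^n ≠ a·α^m, where δ = (1+√5)/2, α is the unique real root of x³ − x − 1, and a = (1+α)/(−α²+3α+1). (Equivalently, the quantity Λ = a^{−1} δ^n α^{−m} − 1 never vanishes.) -/
/-!
Put `d = -α² + 3α + 1`. Since `α` is a unit among the algebraic integers and `1 + α = α³`, if
`a * α ^ m = α ^ (m + 3) / d` were an algebraic integer, then so would be `d⁻¹`.
But `d` has norm 23: it is a root of `X³ - X² - 23`, so `d⁻¹` is a root of `23X³ + X - 1`, which is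
irreducible over `ℤ` because it has no root modulo 2, and whose leading coefficient is not a unit.
The powers of the golden ratio, on the other hand, are algebraic integers.
-/

open Polynomial

theorem irreducible_of_isPrimitive_of_irreducible_map {R S : Type*} [CommRing R]
    [NoZeroDivisors R] [CommRing S] [IsDomain S] (φ : R →+* S) {p : R[X]} (hp : p.IsPrimitive)
    (hlead : φ p.leadingCoeff ≠ 0) (hmap : Irreducible (p.map φ)) : Irreducible p := by
  have isUnit_of_isUnit_map {q r : R[X]} (hqr : p = q * r) (hq : IsUnit (q.map φ)) :
      IsUnit q := by
    have hqlead : φ q.leadingCoeff ≠ 0 := by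
      rw [hqr, leadingCoeff_mul, map_mul] at hlead
      exact left_ne_zero_of_mul hlead
    have hqdeg : q.natDegree = 0 := by
      rw [← natDegree_map_of_leadingCoeff_ne_zero φ hqlead, natDegree_eq_zero_of_isUnit hq]
    obtain ⟨c, rfl⟩ := natDegree_eq_zero.mp hqdeg
    exact (hp c (hqr ▸ dvd_mul_right _ _)).map C
  refine ⟨fun h ↦ hmap.not_isUnit (h.map (mapRingHom φ)), fun q r hqr ↦ ?_⟩
  exact (hmap.isUnit_or_isUnit (by rw [hqr, Polynomial.map_mul])).imp
    (isUnit_of_isUnit_map hqr) (isUnit_of_isUnit_map (hqr.trans (mul_comm q r)))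

theorem leadingCoeff_twentyThree_mul_X_pow_three_add_X_sub_one :
    (23 * X ^ 3 + X - 1 : ℤ[X]).leadingCoeff = 23 := by
  have hdeg : (23 * X ^ 3 + X - 1 : ℤ[X]).natDegree = 3 := by compute_degree!
  rw [leadingCoeff, hdeg]
  simp [coeff_X, coeff_one]

theorem irreducible_X_pow_three_add_X_add_one_zmod_two :
    Irreducible (X ^ 3 + X + 1 : (ZMod 2)[X]) := by
  have hdeg : (X ^ 3 + X + 1 : (ZMod 2)[X]).natDegree = 3 := by compute_degree!
  refine irreducible_of_degree_le_three_of_not_isRoot (by simp [hdeg]) fun x ↦ ?_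
  simp only [IsRoot.def, eval_add, eval_pow, eval_X, eval_one]
  decide +revert

theorem irreducible_twentyThree_mul_X_pow_three_add_X_sub_one :
    Irreducible (23 * X ^ 3 + X - 1 : ℤ[X]) := by
  have hprim : (23 * X ^ 3 + X - 1 : ℤ[X]).IsPrimitive := fun c hc ↦ by
    simpa [coeff_X, coeff_one] using isUnit_of_dvd_unit ((C_dvd_iff_dvd_coeff _ _).mp hc 1)
  have hmap : (23 * X ^ 3 + X - 1 : ℤ[X]).map (Int.castRingHom (ZMod 2)) = X ^ 3 + X + 1 := by
    have h23 : (23 : (ZMod 2)[X]) = 1 := congrArg C (show (23 : ZMod 2) = 1 from rfl)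
    simp [CharTwo.sub_eq_add, h23]
  refine irreducible_of_isPrimitive_of_irreducible_map (Int.castRingHom (ZMod 2)) hprim ?_ ?_
  · rw [leadingCoeff_twentyThree_mul_X_pow_three_add_X_sub_one]
    decide
  · rw [hmap]
    exact irreducible_X_pow_three_add_X_add_one_zmod_two

theorem not_isIntegral_of_twentyThree_mul_pow_three_add_eq_one {A : Type*} [CommRing A]
    [IsDomain A] [CharZero A] {x : A} (hx : 23 * x ^ 3 + x = 1) : ¬ IsIntegral ℤ x := by
  have hroot : aeval x (23 * X ^ 3 + X - 1 : ℤ[X]) = 0 := by simp [map_ofNat, hx]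
  rw [minpoly.IsIntegrallyClosed.isIntegral_iff_isUnit_leadingCoeff
    irreducible_twentyThree_mul_X_pow_three_add_X_sub_one hroot,
    leadingCoeff_twentyThree_mul_X_pow_three_add_X_sub_one]
  decide

theorem isIntegral_zpow {R K : Type*} [CommRing R] [DivisionRing K] [Algebra R K] {x : K}
    (hx : IsIntegral R x) (hx' : IsIntegral R x⁻¹) (n : ℤ) : IsIntegral R (x ^ n) := by
  cases n with
  | ofNat k => simpa using hx.pow k
  | negSucc k => simpa [zpow_negSucc] using hx'.pow (k + 1)

theorem isIntegral_goldenRatio : IsIntegral ℤ Real.goldenRatio :=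
  ⟨X ^ 2 - X - 1, by monicity!, by simp [Real.goldenRatio_sq]⟩

section PowThreeEqAddOne

variable {K : Type*} [Field K] {α : K}

theorem isIntegral_zpow_of_pow_three_eq_add_one (hα : α ^ 3 = α + 1) (m : ℤ) :
    IsIntegral ℤ (α ^ m) := by
  have hint : IsIntegral ℤ α := ⟨X ^ 3 - X - 1, by monicity!, by simp [hα]⟩
  have hinv : α⁻¹ = α ^ 2 - 1 := inv_eq_of_mul_eq_one_right (by linear_combination hα)
  exact isIntegral_zpow hint (hinv ▸ (hint.pow 2).sub isIntegral_one) m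

theorem not_isIntegral_inv_neg_sq_add_three_mul_add_one [CharZero K] (hα : α ^ 3 = α + 1) :
    ¬ IsIntegral ℤ (-α ^ 2 + 3 * α + 1)⁻¹ := by
  set d := -α ^ 2 + 3 * α + 1 with hd
  have hroot : d ^ 3 = d ^ 2 + 23 := by
    rw [hd]
    linear_combination (-α ^ 3 + 9 * α ^ 2 - 26 * α + 23) * hα
  have hd0 : d ≠ 0 := by
    intro h
    norm_num [h] at hroot
  apply not_isIntegral_of_twentyThree_mul_pow_three_add_eq_one
  field_simp
  linear_combination -hroot

theorem Lambda_ne_zero_general [CharZero K] (hα : α ^ 3 = α + 1) {a : K}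
    (ha : a = (1 + α) / (-α ^ 2 + 3 * α + 1)) {β : K} (hβ : IsIntegral ℤ β) (m : ℤ) :
    β ≠ a * α ^ m := by
  intro h
  have hα0 : α ≠ 0 := by
    rintro rfl
    norm_num at hα
  have hinv : (-α ^ 2 + 3 * α + 1)⁻¹ = β * α ^ (-(m + 3)) :=
    calc (-α ^ 2 + 3 * α + 1)⁻¹
        = α ^ (3 : ℤ) * (-α ^ 2 + 3 * α + 1)⁻¹ * α ^ m * α ^ (-(m + 3)) := by
          rw [zpow_neg, zpow_add₀ hα0]
          field_simp
      _ = β * α ^ (-(m + 3)) := by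
          rw [h, ha, add_comm 1 α, ← hα, div_eq_mul_inv, zpow_ofNat]
  exact not_isIntegral_inv_neg_sq_add_three_mul_add_one hα
    (hinv ▸ hβ.mul (isIntegral_zpow_of_pow_three_eq_add_one hα _))

end PowThreeEqAddOne

theorem Lambda_ne_zero (α : ℝ) (hα : α ^ 3 = α + 1)
    (a : ℝ) (ha : a = (1 + α) / (-α ^ 2 + 3 * α + 1))
    (n m : ℕ) (hn : 0 < n) (hm : 0 < m) :
    ((1 + Real.sqrt 5) / 2) ^ n ≠ a * α ^ m := by
  simpa only [Real.goldenRatio, zpow_natCast] using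
    Lambda_ne_zero_general hα ha (isIntegral_goldenRatio.pow n) m
end

section
/- For all integers n > n₁ ≥ 1 with n ≥ 4 and every positive integer m, δ^n − δ^{n₁} ≠ a·α^m, where δ = (1+√5)/2, α is the unique real root of x³ − x − 1, and a = (1+α)/(−α²+3α+1). (Equivalently, the quantity Λ₁ = ((δ^{n−n₁}−1)/a)·δ^{n₁}·α^{−m} − 1 never vanishes.) -/
/-! The number `a * α ^ m` lies in the cubic field `ℚ⟮α⟯`. Let `φ = δ` be the golden ratio, `ψ` its
conjugate and `F` the Fibonacci sequence. Since `φ ^ n = F (n + 1) - ψ * F n`, any subfield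
containing `φ ^ n - φ ^ n₁` with `F n ≠ F n₁` contains `ψ`. But `ψ` has degree `2` over `ℚ`, so it
lies in no field of odd degree. -/

open Module Polynomial IntermediateField Real
open scoped goldenRatio

section OddDegree

variable {F E : Type*} [Field F] [Field E] [Algebra F E] {K : IntermediateField F E}

theorem natDegree_minpoly_dvd_finrank {x : E} (hx : IsIntegral F x) (hxK : x ∈ K) :
    (minpoly F x).natDegree ∣ finrank F K := by
  rw [← adjoin.finrank hx]
  exact Dvd.intro _ (finrank_bot_mul_relfinrank (adjoin_simple_le_iff.2 hxK))

theorem mem_bot_of_odd_finrank_of_natDegree_le_two (hK : Odd (finrank F K)) {p : F[X]} (hp : p ≠ 0)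
    (hp_deg : p.natDegree ≤ 2) {x : E} (hx : aeval x p = 0) (hxK : x ∈ K) :
    x ∈ (⊥ : IntermediateField F E) := by
  have hx_int : IsIntegral F x := IsAlgebraic.isIntegral ⟨p, hp, hx⟩
  have h_odd : Odd (minpoly F x).natDegree :=
    hK.of_dvd_nat (natDegree_minpoly_dvd_finrank hx_int hxK)
  have h_le : (minpoly F x).natDegree ≤ 2 :=
    (natDegree_le_of_dvd (minpoly.dvd F x hx) hp).trans hp_deg
  have h_one : (minpoly F x).natDegree = 1 := by grind
  exact mem_bot.2 (minpoly.natDegree_eq_one_iff.1 h_one)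

end OddDegree

theorem finrank_adjoin_of_pow_eq_add_one {E : Type*} [Field E] [Algebra ℚ E] {x : E} {n : ℕ}
    (hn : 1 < n) (hx : x ^ n = x + 1) : finrank ℚ ℚ⟮x⟯ = n := by
  have h_split : (X ^ n - X - 1 : ℚ[X]) = X ^ n - (X + C 1) := by rw [C_1, sub_sub]
  have h_lt : (X + C 1 : ℚ[X]).degree < n := by rw [degree_X_add_C]; exact_mod_cast hn
  have h_monic : (X ^ n - X - 1 : ℚ[X]).Monic := h_split ▸ monic_X_pow_sub h_lt
  have h_natDegree : (X ^ n - X - 1 : ℚ[X]).natDegree = n := by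
    rw [h_split, natDegree_sub_eq_left_of_natDegree_lt, natDegree_X_pow]
    rwa [natDegree_X_add_C, natDegree_X_pow]
  have h_root : aeval x (X ^ n - X - 1 : ℚ[X]) = 0 := by simp [hx]
  have h_minpoly : X ^ n - X - 1 = minpoly ℚ x :=
    minpoly.eq_of_irreducible_of_monic (X_pow_sub_X_sub_one_irreducible_rat hn.ne') h_root h_monic
  rw [adjoin.finrank ⟨_, h_monic, h_root⟩, ← h_minpoly, h_natDegree]

theorem goldenConj_notMem_of_odd_finrank {K : IntermediateField ℚ ℝ} (hK : Odd (finrank ℚ K)) :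
    ψ ∉ K := by
  intro hψ
  have h_monic : (X ^ 2 - X - 1 : ℚ[X]).Monic := by monicity!
  have h_deg : (X ^ 2 - X - 1 : ℚ[X]).natDegree ≤ 2 := by compute_degree
  have h_root : aeval ψ (X ^ 2 - X - 1 : ℚ[X]) = 0 := by simp [goldenConj_sq]
  exact goldenConj_irrational <| mem_bot.1 <|
    mem_bot_of_odd_finrank_of_natDegree_le_two hK h_monic.ne_zero h_deg h_root hψ

theorem goldenConj_mem_of_goldenRatio_pow_sub_pow_mem {S : Type*} [SetLike S ℝ] [SubfieldClass S ℝ]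
    {K : S} {n k : ℕ} (hnk : n.fib ≠ k.fib) (hK : φ ^ n - φ ^ k ∈ K) : ψ ∈ K := by
  have h_ne : (n.fib - k.fib : ℝ) ≠ 0 := sub_ne_zero.2 (Nat.cast_injective.ne hnk)
  have h_eq : ψ = (((n + 1).fib - (k + 1).fib) - (φ ^ n - φ ^ k)) / (n.fib - k.fib) := by
    rw [eq_div_iff h_ne, ← fib_succ_sub_goldenConj_mul_fib n, ← fib_succ_sub_goldenConj_mul_fib k]
    ring
  rw [h_eq]
  exact div_mem (sub_mem (sub_mem (natCast_mem _ _) (natCast_mem _ _)) hK)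
    (sub_mem (natCast_mem _ _) (natCast_mem _ _))

theorem fib_lt_fib_of_three_le {k n : ℕ} (hkn : k < n) (hn : 3 ≤ n) : k.fib < n.fib := by
  obtain ⟨l, rfl⟩ := Nat.exists_eq_add_of_le' (by lia : 1 ≤ n)
  exact (Nat.fib_mono (Nat.le_of_lt_succ hkn)).trans_lt (Nat.fib_lt_fib_succ (by lia))

theorem mul_pow_mem_adjoin_of_eq_div {F E : Type*} [Field F] [Field E] [Algebra F E] {a α : E}
    (ha : a = (1 + α) / (-α ^ 2 + 3 * α + 1)) (m : ℕ) : a * α ^ m ∈ F⟮α⟯ := by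
  have hα : α ∈ F⟮α⟯ := mem_adjoin_simple_self F α
  rw [ha]
  exact mul_mem (div_mem (add_mem (one_mem _) hα) (add_mem (add_mem (neg_mem (pow_mem hα 2))
    (mul_mem (ofNat_mem _ 3) hα)) (one_mem _))) (pow_mem hα m)

theorem Lambda₁_ne_zero_general {K : IntermediateField ℚ ℝ} (hK : Odd (finrank ℚ K)) {n n₁ : ℕ}
    (h_fib : n.fib ≠ n₁.fib) : φ ^ n - φ ^ n₁ ∉ K :=
  fun h => goldenConj_notMem_of_odd_finrank hK
    (goldenConj_mem_of_goldenRatio_pow_sub_pow_mem h_fib h)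

theorem Lambda₁_ne_zero (α : ℝ) (hα : α ^ 3 = α + 1)
    (a : ℝ) (ha : a = (1 + α) / (-α ^ 2 + 3 * α + 1))
    (n n₁ m : ℕ) (hn₁ : 1 ≤ n₁) (hnn₁ : n₁ < n) (hn : 4 ≤ n) (hm : 0 < m) :
    ((1 + Real.sqrt 5) / 2) ^ n - ((1 + Real.sqrt 5) / 2) ^ n₁ ≠ a * α ^ m := by
  have h_odd : Odd (finrank ℚ ℚ⟮α⟯) := by
    rw [finrank_adjoin_of_pow_eq_add_one (by norm_num) hα]
    decide
  have h_fib : n.fib ≠ n₁.fib := (fib_lt_fib_of_three_le hnn₁ (by lia)).ne'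
  intro h
  exact Lambda₁_ne_zero_general h_odd h_fib (h ▸ mul_pow_mem_adjoin_of_eq_div ha m)
end

section
/- For all positive integers n and all integers m > m₁ ≥ 1, δ^{2n} ≠ α^{2m₁}·a²·(α^{m−m₁} − 1)², where δ = (1+√5)/2, α is the unique real root of x³ − x − 1, and a = (1+α)/(−α²+3α+1). (Equivalently, the quantity Λ₂ = (a(α^{m−m₁}−1))^{−1}·δ^n·α^{−m₁} − 1 never vanishes.) -/
/-!
A number field of odd degree contains no quadratic irrationality. Since `φ ^ (k + 1)` equals
`φ * F_{k+1} + F_k` with `F_{k+1} ≠ 0`, a field containing a positive power of `φ` contains `φ`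
itself. So no such power lies in `ℚ(α)`, which has degree 3 over `ℚ`, whereas
`α ^ (2 * m₁) * a ^ 2 * (α ^ (m - m₁) - 1) ^ 2` does.
-/

open Module Polynomial
open scoped IntermediateField goldenRatio

theorem mem_bot_of_odd_finrank_of_natDegree_le_two_s12 {F E : Type*} [Field F] [Field E] [Algebra F E]
    {K : IntermediateField F E} (hK : Odd (finrank F K)) {x : E} (hx : x ∈ K)
    (hdeg : (minpoly F x).natDegree ≤ 2) : x ∈ (⊥ : IntermediateField F E) := by
  have : FiniteDimensional F K := finite_of_finrank_pos hK.pos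
  have hint : IsIntegral F (⟨x, hx⟩ : K) := .of_finite F _
  have hodd : Odd (minpoly F x).natDegree := by
    rw [← IntermediateField.minpoly_eq (⟨x, hx⟩ : K)]
    exact hK.of_dvd_nat (minpoly.degree_dvd hint)
  have hone : (minpoly F x).natDegree = 1 := by
    obtain ⟨r, hr⟩ := hodd
    lia
  exact IntermediateField.mem_bot.mpr (minpoly.natDegree_eq_one_iff.mp hone)

theorem goldenRatio_notMem_of_odd_finrank {K : IntermediateField ℚ ℝ}
    (hK : Odd (finrank ℚ K)) : φ ∉ K := by
  intro hφ
  have hmonic : (X ^ 2 - X - 1 : ℚ[X]).Monic := by monicity!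
  have hroot : aeval φ (X ^ 2 - X - 1 : ℚ[X]) = 0 := by simp [Real.goldenRatio_sq]
  have hdeg : (minpoly ℚ φ).natDegree ≤ 2 :=
    (natDegree_le_of_dvd (minpoly.dvd ℚ φ hroot) hmonic.ne_zero).trans (by compute_degree)
  exact Real.goldenRatio_irrational (IntermediateField.mem_bot.mp
    (mem_bot_of_odd_finrank_of_natDegree_le_two_s12 hK hφ hdeg))

theorem goldenRatio_mem_of_pow_mem {S : Type*} [SetLike S ℝ] [SubfieldClass S ℝ] {K : S}
    {k : ℕ} (hk : k ≠ 0) (h : φ ^ k ∈ K) : φ ∈ K := by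
  obtain ⟨j, rfl⟩ := Nat.exists_eq_succ_of_ne_zero hk
  have hfib : (Nat.fib (j + 1) : ℝ) ≠ 0 := by
    exact_mod_cast (Nat.fib_pos.mpr j.succ_pos).ne'
  have hφ : φ = (φ ^ (j + 1) - Nat.fib j) / Nat.fib (j + 1) := by
    rw [eq_div_iff hfib, ← Real.goldenRatio_mul_fib_succ_add_fib, add_sub_cancel_right]
  rw [hφ]
  exact div_mem (sub_mem h (natCast_mem K _)) (natCast_mem K _)

theorem natDegree_minpoly_of_pow_eq_add_one {E : Type*} [Ring E] [Nontrivial E] [Algebra ℚ E]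
    {x : E} {n : ℕ} (hn : 1 < n) (hx : x ^ n = x + 1) : (minpoly ℚ x).natDegree = n := by
  have hdeg : (X + 1 : ℚ[X]).degree < n := by
    rw [← C_1, degree_X_add_C]
    exact_mod_cast hn
  have hmonic : (X ^ n - X - 1 : ℚ[X]).Monic := by
    rw [sub_sub]
    exact monic_X_pow_sub hdeg
  have hmin : X ^ n - X - 1 = minpoly ℚ x :=
    minpoly.eq_of_irreducible_of_monic (X_pow_sub_X_sub_one_irreducible_rat hn.ne')
      (by simp [hx]) hmonic
  rw [← hmin, sub_sub]
  apply natDegree_eq_of_degree_eq_some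
  rw [degree_sub_eq_left_of_degree_lt (by rwa [degree_X_pow]), degree_X_pow]

theorem one_add_div_quadratic_mem {S E : Type*} [DivisionRing E] [SetLike S E]
    [SubfieldClass S E] {K : S} {x : E} (hx : x ∈ K) : (1 + x) / (-x ^ 2 + 3 * x + 1) ∈ K :=
  div_mem (add_mem (one_mem K) hx)
    (add_mem (add_mem (neg_mem (pow_mem hx 2)) (mul_mem (ofNat_mem K 3) hx)) (one_mem K))

theorem Lambda₂_ne_zero_general {α a : ℝ} (hα : Odd (minpoly ℚ α).natDegree) (ha : a ∈ ℚ⟮α⟯)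
    {k : ℕ} (hk : k ≠ 0) (i j : ℕ) : φ ^ k ≠ α ^ i * a ^ 2 * (α ^ j - 1) ^ 2 := by
  intro h
  have hint : IsIntegral ℚ α := minpoly.ne_zero_iff.mp (ne_zero_of_natDegree_gt hα.pos)
  have hodd : Odd (finrank ℚ ℚ⟮α⟯) := by rwa [IntermediateField.adjoin.finrank hint]
  have hαK : α ∈ ℚ⟮α⟯ := IntermediateField.mem_adjoin_simple_self ℚ α
  have hmem : φ ^ k ∈ ℚ⟮α⟯ := by
    rw [h]
    exact mul_mem (mul_mem (pow_mem hαK i) (pow_mem ha 2))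
      (pow_mem (sub_mem (pow_mem hαK j) (one_mem _)) 2)
  exact goldenRatio_notMem_of_odd_finrank hodd (goldenRatio_mem_of_pow_mem hk hmem)

theorem Lambda₂_ne_zero (α : ℝ) (hα : α ^ 3 = α + 1)
    (a : ℝ) (ha : a = (1 + α) / (-α ^ 2 + 3 * α + 1))
    (n m m₁ : ℕ) (hn : 0 < n) (hm₁ : 1 ≤ m₁) (hmm₁ : m₁ < m) :
    ((1 + Real.sqrt 5) / 2) ^ (2 * n) ≠ α ^ (2 * m₁) * a ^ 2 * (α ^ (m - m₁) - 1) ^ 2 := by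
  have hdeg : (minpoly ℚ α).natDegree = 3 :=
    natDegree_minpoly_of_pow_eq_add_one (by norm_num) hα
  have haK : a ∈ ℚ⟮α⟯ :=
    ha ▸ one_add_div_quadratic_mem (IntermediateField.mem_adjoin_simple_self ℚ α)
  exact Lambda₂_ne_zero_general (hdeg ▸ Nat.odd_iff.mpr rfl) haK (by positivity) _ _
end

section
/- Suppose n > n₁ ≥ 1 and m > m₁ ≥ 1 are integers with L_n − L_{n₁} = 𝒫_m − 𝒫_{m₁}. Then |δ^n − a·α^m| < 4.76·max{δ^{n₁}, α^{m₁}}, where δ = (1+√5)/2, α is the unique real root of x³ − x − 1, and a = (1+α)/(−α²+3α+1). -/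
/-- The Padovan sequence: 𝒫₀ = 𝒫₁ = 𝒫₂ = 1, 𝒫_{k+3} = 𝒫_{k+1} + 𝒫_k. -/
def padovan : ℕ → ℕ
  | 0 => 1
  | 1 => 1
  | 2 => 1
  | k + 3 => padovan (k + 1) + padovan k

/-- The Lucas sequence: L₀ = 2, L₁ = 1, L_{k+2} = L_{k+1} + L_k. -/
def lucasSeq : ℕ → ℕ
  | 0 => 2
  | 1 => 1
  | k + 2 => lucasSeq (k + 1) + lucasSeq k

/-!
By Binet, `Lₙ = φⁿ + ψⁿ` with `-1 < ψ < 0`, so `|ψⁿ - ψ^{n₁}| ≤ 1 - ψ = φ`. The Padovan numbers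
satisfy `|𝒫ₖ - a αᵏ| < 1/2`: since `x³ - x - 1 = (x - α)(x² + αx + α² - 1)`, the error obeys a
second-order recurrence whose complex conjugate characteristic roots have modulus
`√(α² - 1) < 1`, so a positive definite quadratic form in two consecutive errors decays
geometrically. Substituting both approximations into the equation leaves
`|φⁿ - a αᵐ| < |φ^{n₁} - a α^{m₁}| + φ + 1`, and `|φ^{n₁} - a α^{m₁}|` is less than
`max (φ^{n₁}) (α^{m₁})` because `0 < a < 1`.
-/

open scoped goldenRatio

theorem lucasSeq_eq_goldenRatio_pow_add_goldenConj_pow :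
    ∀ n : ℕ, (lucasSeq n : ℝ) = φ ^ n + ψ ^ n
  | 0 => by norm_num [lucasSeq]
  | 1 => by simp [lucasSeq]
  | n + 2 => by
    rw [lucasSeq, Nat.cast_add, lucasSeq_eq_goldenRatio_pow_add_goldenConj_pow (n + 1),
      lucasSeq_eq_goldenRatio_pow_add_goldenConj_pow n]
    linear_combination -φ ^ n * Real.goldenRatio_sq - ψ ^ n * Real.goldenConj_sq

theorem pow_mem_Icc_of_mem_Icc_neg_one_zero {R : Type*} [CommRing R] [LinearOrder R]
    [IsStrictOrderedRing R] {x : R} (hx : x ∈ Set.Icc (-1) 0) (n : ℕ) : x ^ n ∈ Set.Icc x 1 := by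
  obtain ⟨neg_one_le, nonpos⟩ := hx
  induction n with
  | zero => simpa using nonpos.trans zero_le_one
  | succ n ih =>
    rw [pow_succ']
    constructor <;> nlinarith [ih.1, ih.2]

theorem abs_goldenConj_pow_sub_pow_le (n k : ℕ) : |ψ ^ n - ψ ^ k| ≤ φ := by
  have pow_mem : ∀ j : ℕ, ψ ^ j ∈ Set.Icc ψ 1 :=
    pow_mem_Icc_of_mem_Icc_neg_one_zero ⟨Real.neg_one_lt_goldenConj.le, Real.goldenConj_neg.le⟩
  rw [← Real.one_sub_goldenRatio]
  exact abs_sub_le_of_le_of_le (pow_mem n).1 (pow_mem n).2 (pow_mem k).1 (pow_mem k).2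

section LinearRecurrence

variable {R : Type*} [CommRing R]

-- The left-hand side applies the cofactor `x² + αx + α² - 1` of `x - α` in `x³ - x - 1` to `u`.
theorem cofactor_apply_eq_pow_mul {α : R} (hα : α ^ 3 = α + 1) {u : ℕ → R}
    (hu : ∀ k, u (k + 3) = u (k + 1) + u k) (k : ℕ) :
    u (k + 2) + α * u (k + 1) + (α ^ 2 - 1) * u k =
      α ^ k * (u 2 + α * u 1 + (α ^ 2 - 1) * u 0) := by
  induction k with
  | zero => simp
  | succ k ih => linear_combination hu k + α * ih - u k * hα

theorem quadraticForm_linear_recurrence {p q : R} {u : ℕ → R}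
    (hu : ∀ k, u (k + 2) = p * u (k + 1) - q * u k) (k : ℕ) :
    u (k + 1) ^ 2 - p * u (k + 1) * u k + q * u k ^ 2 =
      q ^ k * (u 1 ^ 2 - p * u 1 * u 0 + q * u 0 ^ 2) := by
  induction k with
  | zero => simp
  | succ k ih =>
    rw [hu k]
    linear_combination q * ih

theorem sq_mul_le_of_linear_recurrence [LinearOrder R] [IsStrictOrderedRing R] {p q : R}
    (hpq : p ^ 2 ≤ 4 * q) (hq : q ≤ 1) {u : ℕ → R}
    (hu : ∀ k, u (k + 2) = p * u (k + 1) - q * u k) (k : ℕ) :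
    (4 * q - p ^ 2) * u k ^ 2 ≤ 4 * (u 1 ^ 2 - p * u 1 * u 0 + q * u 0 ^ 2) := by
  have complete_square (x y : R) :
      (4 * q - p ^ 2) * x ^ 2 ≤ 4 * (y ^ 2 - p * y * x + q * x ^ 2) := by
    linarith [sq_nonneg (2 * y - p * x)]
  have q_nonneg : 0 ≤ q := by linarith [sq_nonneg p]
  have initial_nonneg : 0 ≤ 4 * (u 1 ^ 2 - p * u 1 * u 0 + q * u 0 ^ 2) :=
    (mul_nonneg (sub_nonneg.2 hpq) (sq_nonneg _)).trans (complete_square (u 0) (u 1))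
  calc (4 * q - p ^ 2) * u k ^ 2
      ≤ 4 * (u (k + 1) ^ 2 - p * u (k + 1) * u k + q * u k ^ 2) := complete_square _ _
    _ = q ^ k * (4 * (u 1 ^ 2 - p * u 1 * u 0 + q * u 0 ^ 2)) := by
      rw [quadraticForm_linear_recurrence hu k]
      ring
    _ ≤ 4 * (u 1 ^ 2 - p * u 1 * u 0 + q * u 0 ^ 2) :=
      mul_le_of_le_one_left initial_nonneg (pow_le_one₀ q_nonneg hq)

end LinearRecurrence

section Padovan

/-- The error `𝒫ₖ - a αᵏ` of the dominant term in the Binet formula for the Padovan sequence. The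
parameters `α` and `a` are arbitrary, so that the algebraic identities hold in any ring. -/
def padovanError {R : Type*} [CommRing R] (α a : R) (k : ℕ) : R :=
  padovan k - a * α ^ k

theorem padovanError_add_two {R : Type*} [CommRing R] {α a : R} (hα : α ^ 3 = α + 1)
    (ha : a * (3 * α ^ 2 - 1) = α ^ 2 + α) (k : ℕ) :
    padovanError α a (k + 2) =
      -α * padovanError α a (k + 1) - (α ^ 2 - 1) * padovanError α a k := by
  have padovan_cofactor := cofactor_apply_eq_pow_mul hα
    (u := fun k ↦ (padovan k : R)) (fun k ↦ by simp only [padovan, Nat.cast_add]) k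
  simp only [padovan, Nat.cast_one] at padovan_cofactor
  simp only [padovanError]
  linear_combination padovan_cofactor - α ^ k * ha

variable {α a : ℝ}

theorem mem_Ioo_of_cube_eq_self_add_one (hα : α ^ 3 = α + 1) : α ∈ Set.Ioo (5 / 4) (4 / 3) := by
  constructor
  · by_contra! h
    nlinarith [sq_nonneg (α + 5 / 8), sq_nonneg (α + 1)]
  · by_contra! h
    nlinarith [sq_nonneg (α + 2 / 3)]

theorem padovanCoeff_mul_eq (hα : α ^ 3 = α + 1) (ha : a = (1 + α) / (-α ^ 2 + 3 * α + 1)) :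
    a * (3 * α ^ 2 - 1) = α ^ 2 + α := by
  obtain ⟨α_gt, α_lt⟩ := mem_Ioo_of_cube_eq_self_add_one hα
  have denom_pos : 0 < -α ^ 2 + 3 * α + 1 := by nlinarith
  rw [eq_div_iff denom_pos.ne'] at ha
  linear_combination α * ha + a * hα

theorem padovanCoeff_mem_Ioo (hα : 1 < α) (ha : a * (3 * α ^ 2 - 1) = α ^ 2 + α) :
    a ∈ Set.Ioo 0 1 := by
  have derivative_pos : 0 < 3 * α ^ 2 - 1 := by nlinarith
  constructor
  · exact pos_of_mul_pos_left (ha ▸ by positivity) derivative_pos.le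
  · have numerator_lt : α ^ 2 + α < 3 * α ^ 2 - 1 := by nlinarith
    exact lt_of_mul_lt_mul_right (by linarith) derivative_pos.le

theorem padovanError_initial_form_lt (hα : α ^ 3 = α + 1)
    (ha : a * (3 * α ^ 2 - 1) = α ^ 2 + α) :
    padovanError α a 1 ^ 2 + α * padovanError α a 1 * padovanError α a 0 +
      (α ^ 2 - 1) * padovanError α a 0 ^ 2 < (3 * α ^ 2 - 4) / 16 := by
  obtain ⟨α_gt, α_lt⟩ := mem_Ioo_of_cube_eq_self_add_one hα
  have derivative_pos : 0 < 3 * α ^ 2 - 1 := by nlinarith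
  have form_eq : padovanError α a 1 ^ 2 + α * padovanError α a 1 * padovanError α a 0 +
      (α ^ 2 - 1) * padovanError α a 0 ^ 2 = α ^ 2 + α - 2 * a * (α ^ 2 + α - 1) := by
    simp only [padovanError, padovan, Nat.cast_one, pow_zero, pow_one]
    linear_combination a * ha
  rw [form_eq]
  refine lt_of_mul_lt_mul_right ?_ derivative_pos.le
  -- Clearing the denominator `3α² - 1` of `a` and reducing modulo `α³ = α + 1` leaves a quadratic
  -- inequality in `α`.
  have reduced : 0 < 20 - 7 * α - 6 * α ^ 2 := by nlinarith
  have difference_eq : 16 * ((3 * α ^ 2 - 4) / 16 * (3 * α ^ 2 - 1) -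
      (α ^ 2 + α - 2 * a * (α ^ 2 + α - 1)) * (3 * α ^ 2 - 1)) = 20 - 7 * α - 6 * α ^ 2 := by
    linear_combination 32 * (α ^ 2 + α - 1) * ha + (-7 * α + 16) * hα
  linarith

theorem abs_padovanError_lt_half (hα : α ^ 3 = α + 1)
    (ha : a * (3 * α ^ 2 - 1) = α ^ 2 + α) (k : ℕ) : |padovanError α a k| < 1 / 2 := by
  obtain ⟨α_gt, α_lt⟩ := mem_Ioo_of_cube_eq_self_add_one hα
  have form_bound := sq_mul_le_of_linear_recurrence (p := -α) (q := α ^ 2 - 1)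
    (by nlinarith) (by nlinarith) (padovanError_add_two hα ha) k
  have initial_lt := padovanError_initial_form_lt hα ha
  have discriminant_pos : 0 < 3 * α ^ 2 - 4 := by nlinarith
  have sq_lt : padovanError α a k ^ 2 < (1 / 2) ^ 2 :=
    lt_of_mul_lt_mul_left (by linarith) discriminant_pos.le
  exact abs_lt_of_sq_lt_sq sq_lt (by norm_num)

end Padovan

theorem abs_sub_mul_lt_max {R : Type*} [CommRing R] [LinearOrder R] [IsStrictOrderedRing R]
    {a x y : R} (ha : a ∈ Set.Ioo 0 1) (hx : 0 < x) (hy : 0 < y) : |x - a * y| < max x y := by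
  have ay_pos : 0 < a * y := mul_pos ha.1 hy
  have ay_lt : a * y < y := mul_lt_of_lt_one_left hy ha.2
  rw [abs_sub_lt_iff]
  constructor
  · exact lt_max_of_lt_left (by linarith)
  · exact lt_max_of_lt_right (by linarith)

theorem abs_delta_pow_sub_a_alpha_pow_general {α a : ℝ} (hα : α ^ 3 = α + 1)
    (ha : a = (1 + α) / (-α ^ 2 + 3 * α + 1)) {n n₁ m m₁ : ℕ}
    (heq : (lucasSeq n : ℤ) - (lucasSeq n₁ : ℤ) = (padovan m : ℤ) - (padovan m₁ : ℤ)) :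
    |φ ^ n - a * α ^ m| < max (φ ^ n₁) (α ^ m₁) + φ + 1 := by
  have α_gt_one : 1 < α := by linarith [(mem_Ioo_of_cube_eq_self_add_one hα).1]
  have coeff_eq : a * (3 * α ^ 2 - 1) = α ^ 2 + α := padovanCoeff_mul_eq hα ha
  have main_lt : |φ ^ n₁ - a * α ^ m₁| < max (φ ^ n₁) (α ^ m₁) :=
    abs_sub_mul_lt_max (padovanCoeff_mem_Ioo α_gt_one coeff_eq)
      (pow_pos Real.goldenRatio_pos n₁) (by positivity)
  have conj_le : |ψ ^ n₁ - ψ ^ n| ≤ φ := abs_goldenConj_pow_sub_pow_le n₁ n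
  have error_lt := abs_padovanError_lt_half hα coeff_eq
  have heq_real : (lucasSeq n : ℝ) - lucasSeq n₁ = padovan m - padovan m₁ := mod_cast heq
  have split : φ ^ n - a * α ^ m = (φ ^ n₁ - a * α ^ m₁) + (ψ ^ n₁ - ψ ^ n) +
      (padovanError α a m - padovanError α a m₁) := by
    simp only [lucasSeq_eq_goldenRatio_pow_add_goldenConj_pow] at heq_real
    simp only [padovanError]
    linear_combination heq_real
  rw [split]
  linarith [abs_add_three (φ ^ n₁ - a * α ^ m₁) (ψ ^ n₁ - ψ ^ n)
    (padovanError α a m - padovanError α a m₁),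
    abs_sub (padovanError α a m) (padovanError α a m₁), error_lt m, error_lt m₁]

theorem abs_delta_pow_sub_a_alpha_pow (α : ℝ) (hα : α ^ 3 = α + 1)
    (a : ℝ) (ha : a = (1 + α) / (-α ^ 2 + 3 * α + 1))
    (n n₁ m m₁ : ℕ) (hn₁ : 1 ≤ n₁) (hnn₁ : n₁ < n) (hm₁ : 1 ≤ m₁) (hmm₁ : m₁ < m)
    (heq : (lucasSeq n : ℤ) - (lucasSeq n₁ : ℤ) = (padovan m : ℤ) - (padovan m₁ : ℤ)) :
    |((1 + Real.sqrt 5) / 2) ^ n - a * α ^ m| <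
      4.76 * max (((1 + Real.sqrt 5) / 2) ^ n₁) (α ^ m₁) := by
  have sharper := abs_delta_pow_sub_a_alpha_pow_general hα ha heq
  have one_le_max : 1 ≤ max (φ ^ n₁) (α ^ m₁) :=
    le_max_of_le_left (one_le_pow₀ Real.one_lt_goldenRatio.le)
  linarith [Real.goldenRatio_lt_two]
end

section
/- Suppose n > n₁ ≥ 1 and m > m₁ ≥ 1 are integers with n ≥ 300, m ≥ 9, and L_n − L_{n₁} = 𝒫_m − 𝒫_{m₁}. Then |a^{−1}·δ^n·α^{−m} − 1| < max{δ^{n₁−n+7}, α^{m₁−m+7}}, where δ = (1+√5)/2, α is the unique real root of x³ − x − 1, and a = (1+α)/(−α²+3α+1). -/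
/-!
Both sequences stay within `1` of their dominant terms, `L_k ≈ φ ^ k` and `𝒫_k ≈ a α ^ k`, so the
equation makes `φ ^ n - a α ^ m` equal to `L_{n₁} - 𝒫_{m₁}` up to an error of `2`. It remains to
divide by `a α ^ m`, which is at least `φ ^ (n - 3)` because `L_n - L_{n₁} ≥ L_{n-2}` for `n ≥ 3`.

The complex roots of `x³ - x - 1` are avoided: the error `e_k = 𝒫_k - a α ^ k` satisfies the
recurrence with characteristic polynomial `(x³ - x - 1) / (x - α) = x² + α x + (α² - 1)`, and a
positive definite quadratic form in `(e_{k+1}, e_k)` is multiplied by `α² - 1 < 1` at each step.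
-/

open Real
open scoped goldenRatio

lemma coe_lucasSeq_eq (k : ℕ) : (lucasSeq k : ℝ) = φ ^ k + ψ ^ k := by
  fun_induction lucasSeq k with
  | case1 => norm_num
  | case2 => simp
  | case3 k ih₁ ih₀ =>
    rw [Nat.cast_add, ih₁, ih₀]
    change _ = φ ^ (k + 2) + ψ ^ (k + 2)
    linear_combination -φ ^ k * goldenRatio_sq - ψ ^ k * goldenConj_sq

lemma abs_goldenConj_pow_le_one (k : ℕ) : |ψ ^ k| ≤ 1 := by
  rw [abs_pow]
  exact pow_le_one₀ (abs_nonneg _)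
    (abs_le.2 ⟨neg_one_lt_goldenConj.le, goldenConj_neg.le.trans zero_le_one⟩)

lemma abs_lucasSeq_sub_goldenRatio_pow_le_one (k : ℕ) : |(lucasSeq k : ℝ) - φ ^ k| ≤ 1 := by
  rw [coe_lucasSeq_eq, add_sub_cancel_left]
  exact abs_goldenConj_pow_le_one k

lemma lucasSeq_add_one_lt_goldenRatio_pow (k : ℕ) : (lucasSeq k : ℝ) + 1 < φ ^ (k + 4) := by
  have hpow : 1 ≤ φ ^ k := one_le_pow₀ one_lt_goldenRatio.le
  have hfour : φ ^ 4 = 3 * φ + 2 := by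
    linear_combination (φ ^ 2 + φ + 2) * goldenRatio_sq
  calc (lucasSeq k : ℝ) + 1 ≤ φ ^ k + 2 := by
        linarith [le_of_abs_le (abs_lucasSeq_sub_goldenRatio_pow_le_one k)]
    _ < φ ^ k * (3 * φ + 2) := by nlinarith [one_lt_goldenRatio]
    _ = φ ^ (k + 4) := by rw [pow_add, hfour]

lemma lucasSeq_pos (k : ℕ) : 0 < lucasSeq k := by
  fun_induction lucasSeq k <;> lia

lemma goldenRatio_pow_le_lucasSeq_succ (k : ℕ) : φ ^ k ≤ lucasSeq (k + 1) := by
  have hψφ : ψ ^ k ≤ φ ^ k :=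
    (le_of_abs_le (abs_goldenConj_pow_le_one k)).trans (one_le_pow₀ one_lt_goldenRatio.le)
  have hdiff : (lucasSeq (k + 1) : ℝ) - φ ^ k = -ψ * (φ ^ k - ψ ^ k) := by
    rw [coe_lucasSeq_eq]
    linear_combination φ ^ k * goldenRatio_add_goldenConj
  rw [← sub_nonneg, hdiff]
  exact mul_nonneg (neg_nonneg.2 goldenConj_neg.le) (sub_nonneg.2 hψφ)

lemma lucasSeq_le_lucasSeq {k l : ℕ} (hkl : k ≤ l) (hl : 2 ≤ l) : lucasSeq k ≤ lucasSeq l := by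
  induction l, hl using Nat.le_induction with
  | base => interval_cases k <;> simp [lucasSeq]
  | succ l hl ih =>
    obtain rfl | hkl := hkl.eq_or_lt
    · rfl
    · obtain ⟨j, rfl⟩ := Nat.exists_eq_add_of_le' (one_le_two.trans hl)
      exact (ih (Nat.le_of_lt_succ hkl)).trans (Nat.le_add_right _ _)

lemma goldenRatio_pow_le_lucasSeq_sub {j k : ℕ} (hk : k < j + 3) :
    φ ^ j ≤ (lucasSeq (j + 3) : ℝ) - lucasSeq k := by
  have hmono : (lucasSeq k : ℝ) ≤ lucasSeq (j + 2) := by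
    exact_mod_cast lucasSeq_le_lucasSeq (Nat.le_of_lt_succ hk) (Nat.le_add_left 2 j)
  have hrec : (lucasSeq (j + 3) : ℝ) = lucasSeq (j + 2) + lucasSeq (j + 1) := by
    rw [lucasSeq, Nat.cast_add]
  linarith [goldenRatio_pow_le_lucasSeq_succ j]

section QuadraticInvariant

variable {R : Type*} [CommRing R] {p q : R} {e : ℕ → R}

lemma quadraticForm_eq_pow_mul_of_recurrence
    (he : ∀ k, e (k + 2) + p * e (k + 1) + q * e k = 0) (k : ℕ) :
    e (k + 1) ^ 2 + p * e (k + 1) * e k + q * e k ^ 2 =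
      q ^ k * (e 1 ^ 2 + p * e 1 * e 0 + q * e 0 ^ 2) := by
  induction k with
  | zero => simp
  | succ k ih => linear_combination q * ih + (e (k + 2) - q * e k) * he k

lemma mul_sq_le_of_recurrence [LinearOrder R] [IsStrictOrderedRing R]
    (he : ∀ k, e (k + 2) + p * e (k + 1) + q * e k = 0) (k : ℕ) :
    (4 * q - p ^ 2) * e k ^ 2 ≤ 4 * q ^ k * (e 1 ^ 2 + p * e 1 * e 0 + q * e 0 ^ 2) := by
  linarith [quadraticForm_eq_pow_mul_of_recurrence he k,
    sq_nonneg (2 * e (k + 1) + p * e k)]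

end QuadraticInvariant

section Padovan

lemma padovan_pos (k : ℕ) : 0 < padovan k := by
  fun_induction padovan k <;> lia

lemma padovan_add_two_add {R : Type*} [CommRing R] {x : R} (hx : x ^ 3 = x + 1) (k : ℕ) :
    (padovan (k + 2) : R) + x * padovan (k + 1) + (x ^ 2 - 1) * padovan k =
      x ^ k * (x ^ 2 + x) := by
  induction k with
  | zero =>
    simp only [padovan]
    ring
  | succ k ih =>
    rw [show padovan (k + 1 + 2) = padovan (k + 1) + padovan k from rfl]
    push_cast
    linear_combination x * ih - (padovan k : R) * hx

/-- The coefficient `a` of `α ^ k` in the Binet formula for the Padovan sequence, where `α` is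
the real root of `x³ - x - 1`. -/
noncomputable def padovanCoeff (α : ℝ) : ℝ :=
  (1 + α) / (-α ^ 2 + 3 * α + 1)

variable {α : ℝ} (hα : α ^ 3 = α + 1)

include hα

lemma plastic_mem_Ioo : α ∈ Set.Ioo (13 / 10) (4 / 3) := by
  -- For `f x = x ^ 3 - x`, `f α - f c = (α - c) * ((α + c / 2) ^ 2 + (3 * c ^ 2 / 4 - 1))`.
  constructor <;> by_contra! h
  · nlinarith [mul_nonneg (sub_nonneg.2 h) (sq_nonneg (α + 13 / 20))]
  · nlinarith [mul_nonneg (sub_nonneg.2 h) (sq_nonneg (α + 2 / 3))]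

lemma plastic_pos : 0 < α := by
  linarith [(plastic_mem_Ioo hα).1]

lemma one_le_plastic_pow (k : ℕ) : 1 ≤ α ^ k :=
  one_le_pow₀ (by linarith [(plastic_mem_Ioo hα).1])

lemma six_lt_plastic_pow_seven : 6 < α ^ 7 := by
  have hα₁ := (plastic_mem_Ioo hα).1
  calc (6 : ℝ) < (13 / 10) ^ 7 := by norm_num
    _ < α ^ 7 := by gcongr

lemma padovanCoeff_denom_pos : 0 < -α ^ 2 + 3 * α + 1 := by
  obtain ⟨hα₁, hα₂⟩ := plastic_mem_Ioo hα
  nlinarith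

lemma padovanCoeff_mem_Ioo_s14 : padovanCoeff α ∈ Set.Ioo (7 / 10) (3 / 4) := by
  obtain ⟨hα₁, hα₂⟩ := plastic_mem_Ioo hα
  have hden := padovanCoeff_denom_pos hα
  constructor
  · rw [padovanCoeff, lt_div_iff₀ hden]
    nlinarith
  · rw [padovanCoeff, div_lt_iff₀ hden]
    nlinarith

lemma padovanCoeff_pos : 0 < padovanCoeff α := by
  linarith [(padovanCoeff_mem_Ioo_s14 hα).1]

lemma padovanCoeff_mul_pow_pos (k : ℕ) : 0 < padovanCoeff α * α ^ k :=
  mul_pos (padovanCoeff_pos hα) (pow_pos (plastic_pos hα) k)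

lemma seven_tenths_lt_padovanCoeff_mul_pow (k : ℕ) : 7 / 10 < padovanCoeff α * α ^ k :=
  (padovanCoeff_mem_Ioo_s14 hα).1.trans_le
    (le_mul_of_one_le_right (padovanCoeff_pos hα).le (one_le_plastic_pow hα k))

lemma padovanCoeff_mul_pow_div (j k l : ℕ) :
    padovanCoeff α * α ^ (j + l) / (padovanCoeff α * α ^ k) = α ^ ((j : ℤ) - k + l) := by
  rw [mul_div_mul_left _ _ (padovanCoeff_pos hα).ne', ← zpow_natCast, ← zpow_natCast,
    ← zpow_sub₀ (plastic_pos hα).ne']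
  congr 1
  push_cast
  ring

lemma padovanCoeff_mul_three_mul_sq_sub_one :
    padovanCoeff α * (3 * α ^ 2 - 1) = α ^ 2 + α := by
  have hdiv : padovanCoeff α * (-α ^ 2 + 3 * α + 1) = 1 + α :=
    div_mul_cancel₀ _ (padovanCoeff_denom_pos hα).ne'
  linear_combination α * hdiv + padovanCoeff α * hα

lemma padovan_sub_recurrence (k : ℕ) :
    ((padovan (k + 2) : ℝ) - padovanCoeff α * α ^ (k + 2))
      + α * (padovan (k + 1) - padovanCoeff α * α ^ (k + 1))
      + (α ^ 2 - 1) * (padovan k - padovanCoeff α * α ^ k) = 0 := by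
  linear_combination padovan_add_two_add hα k - α ^ k * padovanCoeff_mul_three_mul_sq_sub_one hα

lemma padovan_sub_initial_form_le :
    (1 - padovanCoeff α * α) ^ 2 + α * (1 - padovanCoeff α * α) * (1 - padovanCoeff α)
      + (α ^ 2 - 1) * (1 - padovanCoeff α) ^ 2 ≤ 1 / 8 := by
  obtain ⟨hα₁, hα₂⟩ := plastic_mem_Ioo hα
  obtain ⟨ha₁, ha₂⟩ := padovanCoeff_mem_Ioo_s14 hα
  have he₀ : 0 ≤ 1 - padovanCoeff α := by linarith
  have he₁ : 0 ≤ 1 - padovanCoeff α * α := by nlinarith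
  calc _ ≤ (9 / 100 : ℝ) ^ 2 + 4 / 3 * (9 / 100) * (3 / 10)
        + ((4 / 3) ^ 2 - 1) * (3 / 10) ^ 2 := by
        gcongr <;> nlinarith
    _ ≤ 1 / 8 := by norm_num

lemma abs_padovan_sub_le_one (k : ℕ) : |(padovan k : ℝ) - padovanCoeff α * α ^ k| ≤ 1 := by
  obtain ⟨hα₁, hα₂⟩ := plastic_mem_Ioo hα
  set e : ℕ → ℝ := fun k ↦ padovan k - padovanCoeff α * α ^ k with he
  have hinit : e 1 ^ 2 + α * e 1 * e 0 + (α ^ 2 - 1) * e 0 ^ 2 ≤ 1 / 8 := by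
    simpa [he, padovan] using padovan_sub_initial_form_le hα
  have hq₀ : 0 ≤ α ^ 2 - 1 := by nlinarith
  have hq₁ : α ^ 2 - 1 ≤ 1 := by nlinarith
  have hsq : (4 * (α ^ 2 - 1) - α ^ 2) * e k ^ 2 ≤ 1 / 2 :=
    calc _ ≤ 4 * (α ^ 2 - 1) ^ k * (e 1 ^ 2 + α * e 1 * e 0 + (α ^ 2 - 1) * e 0 ^ 2) :=
          mul_sq_le_of_recurrence (padovan_sub_recurrence hα) k
      _ ≤ 4 * (α ^ 2 - 1) ^ k * (1 / 8) := by gcongr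
      _ ≤ 4 * 1 * (1 / 8) := by
          gcongr
          exact pow_le_one₀ hq₀ hq₁
      _ = 1 / 2 := by norm_num
  have hdisc : 1 / 2 ≤ 4 * (α ^ 2 - 1) - α ^ 2 := by nlinarith
  rw [← sq_le_one_iff_abs_le_one]
  nlinarith [sq_nonneg (e k)]

lemma padovan_add_one_lt_padovanCoeff_mul_pow (k : ℕ) :
    (padovan k : ℝ) + 1 < padovanCoeff α * α ^ (k + 7) :=
  calc (padovan k : ℝ) + 1 ≤ padovanCoeff α * α ^ k + 2 := by
        linarith [le_of_abs_le (abs_padovan_sub_le_one hα k)]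
    _ < padovanCoeff α * α ^ k * 6 := by
        linarith [seven_tenths_lt_padovanCoeff_mul_pow hα k]
    _ < padovanCoeff α * α ^ k * α ^ 7 :=
        mul_lt_mul_of_pos_left (six_lt_plastic_pow_seven hα) (padovanCoeff_mul_pow_pos hα k)
    _ = padovanCoeff α * α ^ (k + 7) := by rw [pow_add, mul_assoc]

end Padovan

section LinearForm

variable {α : ℝ} (hα : α ^ 3 = α + 1) {n n₁ m m₁ : ℕ}
  (heq : (lucasSeq n : ℝ) - lucasSeq n₁ = padovan m - padovan m₁)

include hα heq

lemma abs_goldenRatio_pow_sub_lt :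
    |φ ^ n - padovanCoeff α * α ^ m| <
      max (φ ^ (n₁ + 4)) (padovanCoeff α * α ^ (m₁ + 7)) := by
  have hL₁ : (1 : ℝ) ≤ lucasSeq n₁ := by exact_mod_cast lucasSeq_pos n₁
  have hP₁ : (1 : ℝ) ≤ padovan m₁ := by exact_mod_cast padovan_pos m₁
  obtain ⟨hn, hn'⟩ := abs_le.1 (abs_lucasSeq_sub_goldenRatio_pow_le_one n)
  obtain ⟨hm, hm'⟩ := abs_le.1 (abs_padovan_sub_le_one hα m)
  have hφ := lucasSeq_add_one_lt_goldenRatio_pow n₁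
  have hα' := padovan_add_one_lt_padovanCoeff_mul_pow hα m₁
  rw [abs_eq_max_neg]
  exact max_lt_max (by linarith) (by linarith)

lemma goldenRatio_pow_le_mul_padovanCoeff (hn : n₁ < n) :
    φ ^ n ≤ φ ^ 3 * (padovanCoeff α * α ^ m) := by
  obtain hn₃ | hn₃ := Nat.lt_or_ge n 3
  · have hlead := seven_tenths_lt_padovanCoeff_mul_pow hα m
    have hφ : 3 / 2 < φ := by nlinarith [goldenRatio_sq, one_lt_goldenRatio]
    calc φ ^ n ≤ φ ^ 2 := pow_le_pow_right₀ one_lt_goldenRatio.le (Nat.le_of_lt_succ hn₃)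
      _ ≤ φ ^ 2 * (φ * (padovanCoeff α * α ^ m)) :=
          le_mul_of_one_le_right (sq_nonneg φ) (by nlinarith)
      _ = φ ^ 3 * (padovanCoeff α * α ^ m) := by ring
  · obtain ⟨j, rfl⟩ := Nat.exists_eq_add_of_le' hn₃
    have hP₁ : (1 : ℝ) ≤ padovan m₁ := by exact_mod_cast padovan_pos m₁
    have hm := le_of_abs_le (abs_padovan_sub_le_one hα m)
    have hj : φ ^ j ≤ padovanCoeff α * α ^ m := by
      linarith [goldenRatio_pow_le_lucasSeq_sub hn]
    rw [pow_add, mul_comm]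
    gcongr

lemma goldenRatio_pow_div_mul_padovanCoeff_le (hn : n₁ < n) :
    φ ^ (n₁ + 4) / (padovanCoeff α * α ^ m) ≤ φ ^ ((n₁ : ℤ) - n + 7) := by
  rw [div_le_iff₀ (padovanCoeff_mul_pow_pos hα m)]
  calc φ ^ (n₁ + 4) = φ ^ ((n₁ : ℤ) - n + 4) * φ ^ n := by
        rw [← zpow_natCast, ← zpow_natCast, ← zpow_add₀ goldenRatio_ne_zero]
        congr 1
        push_cast
        ring
    _ ≤ φ ^ ((n₁ : ℤ) - n + 4) * (φ ^ 3 * (padovanCoeff α * α ^ m)) :=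
        mul_le_mul_of_nonneg_left (goldenRatio_pow_le_mul_padovanCoeff hα heq hn)
          (zpow_nonneg goldenRatio_pos.le _)
    _ = φ ^ ((n₁ : ℤ) - n + 7) * (padovanCoeff α * α ^ m) := by
        rw [← mul_assoc, ← zpow_natCast, ← zpow_add₀ goldenRatio_ne_zero, add_assoc]
        norm_num

end LinearForm

theorem Lambda_bound_general {α : ℝ} (hα : α ^ 3 = α + 1)
    {a : ℝ} (ha : a = (1 + α) / (-α ^ 2 + 3 * α + 1))
    {n n₁ m m₁ : ℕ} (hn : n₁ < n)
    (heq : (lucasSeq n : ℤ) - (lucasSeq n₁ : ℤ) = (padovan m : ℤ) - (padovan m₁ : ℤ)) :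
    |a⁻¹ * φ ^ n * α ^ (-(m : ℤ)) - 1| <
      max (φ ^ ((n₁ : ℤ) - n + 7)) (α ^ ((m₁ : ℤ) - m + 7)) := by
  obtain rfl : a = padovanCoeff α := ha
  replace heq : (lucasSeq n : ℝ) - lucasSeq n₁ = padovan m - padovan m₁ := by exact_mod_cast heq
  set D := padovanCoeff α * α ^ m with hD
  have hD₀ : 0 < D := padovanCoeff_mul_pow_pos hα m
  calc |(padovanCoeff α)⁻¹ * φ ^ n * α ^ (-(m : ℤ)) - 1| = |(φ ^ n - D) / D| := by
        rw [sub_div, div_self hD₀.ne', hD, div_mul_eq_div_div, zpow_neg, zpow_natCast,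
          div_eq_inv_mul (φ ^ n), div_eq_mul_inv]
    _ = |φ ^ n - D| / D := by rw [abs_div, abs_of_pos hD₀]
    _ < max (φ ^ (n₁ + 4)) (padovanCoeff α * α ^ (m₁ + 7)) / D := by
        gcongr
        exact abs_goldenRatio_pow_sub_lt hα heq
    _ = max (φ ^ (n₁ + 4) / D) (padovanCoeff α * α ^ (m₁ + 7) / D) :=
        (max_div_div_right hD₀.le _ _).symm
    _ ≤ max (φ ^ ((n₁ : ℤ) - n + 7)) (α ^ ((m₁ : ℤ) - m + 7)) :=
        max_le_max (goldenRatio_pow_div_mul_padovanCoeff_le hα heq hn)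
          (padovanCoeff_mul_pow_div hα m₁ m 7).le

theorem Lambda_bound (α : ℝ) (hα : α ^ 3 = α + 1)
    (a : ℝ) (ha : a = (1 + α) / (-α ^ 2 + 3 * α + 1))
    (n n₁ m m₁ : ℕ) (hn₁ : 1 ≤ n₁) (hnn₁ : n₁ < n) (hm₁ : 1 ≤ m₁) (hmm₁ : m₁ < m)
    (hn : 300 ≤ n) (hm : 9 ≤ m)
    (heq : (lucasSeq n : ℤ) - (lucasSeq n₁ : ℤ) = (padovan m : ℤ) - (padovan m₁ : ℤ)) :
    |a⁻¹ * ((1 + Real.sqrt 5) / 2) ^ n * α ^ (-(m : ℤ)) - 1| <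
      max (((1 + Real.sqrt 5) / 2) ^ ((n₁ : ℤ) - n + 7)) (α ^ ((m₁ : ℤ) - m + 7)) :=
  Lambda_bound_general hα ha hnn₁ heq
end
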